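/- Let 𝓔 be an abelian category, n ≥ 1, M an nℤ-cluster tilting subcategory of 𝓔, and Y : 0 → Y⁰ → Y¹ → ⋯ → Yⁿ → Y^{n+1} → 0 an n-exact sequence in M. For j ∈ {1,…,n−1} set C^j := Im(Y^j → Y^{j+1}) in 𝓔. If Ext^k(X, C^j) ≠ 0 for some X ∈ M and some k ≥ 1, then n divides k or n divides k+j (i.e., k ∈ nℤ or k ∈ nℤ − j). -/

import Mathlib

open CategoryTheory CategoryTheory.Abelian CategoryTheory.Limits

universe w v u

namespace NZPaper

variable {C : Type u} [Category.{v} C] [Abelian C] [HasExt.{w} C]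

/-- A full (iso-closed) subcategory, encoded as a set of objects, is `n`-cluster tilting if it
admits monic left approximations and epic right approximations and is characterized by the
vanishing of `Ext^i` for `1 ≤ i ≤ n-1` on either side. -/
def IsNClusterTilting (n : ℕ) (M : Set C) : Prop :=
  (∀ ⦃X Y : C⦄, (X ≅ Y) → X ∈ M → Y ∈ M) ∧
  (∀ E : C, ∃ (X : C) (f : E ⟶ X), X ∈ M ∧ Mono f ∧
      ∀ X' ∈ M, ∀ g : E ⟶ X', ∃ h : X ⟶ X', f ≫ h = g) ∧
  (∀ E : C, ∃ (X : C) (f : X ⟶ E), X ∈ M ∧ Epi f ∧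
      ∀ X' ∈ M, ∀ g : X' ⟶ E, ∃ h : X' ⟶ X, h ≫ f = g) ∧
  (∀ E : C, E ∈ M ↔ ∀ Y ∈ M, ∀ i : ℕ, 1 ≤ i → i < n → ∀ e : Ext E Y i, e = 0) ∧
  (∀ E : C, E ∈ M ↔ ∀ Y ∈ M, ∀ i : ℕ, 1 ≤ i → i < n → ∀ e : Ext Y E i, e = 0)

/-- An `nℤ`-cluster tilting subcategory: in addition `Ext^k` vanishes on `M` for every
`k ≥ 1` not divisible by `n`. -/
def IsNZClusterTilting (n : ℕ) (M : Set C) : Prop :=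
  IsNClusterTilting n M ∧
  ∀ X ∈ M, ∀ Y ∈ M, ∀ k : ℕ, 1 ≤ k → ¬ (n ∣ k) → ∀ e : Ext X Y k, e = 0

/-- An exact sequence `0 → Y 0 → Y 1 → ⋯ → Y m → Y (m+1) → 0` in an abelian category,
recorded together with its canonical splicing into short exact sequences
`0 → K i → Y (i+1) → K (i+1) → 0` (`K i` is the image of `d i` for `1 ≤ i ≤ m`,
`K 0 = Y 0` and `K m = Y (m+1)`).  Only the indices `0, …, m+1` (resp. `0, …, m`) of
`Y` (resp. of the differentials and of `K`) are relevant; the remaining values are junk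
(any such exact sequence can be padded by zero objects). -/
structure ExactExtension (C : Type u) [Category.{v} C] [Abelian C] (m : ℕ) where
  Y : ℕ → C
  d : ∀ i, Y i ⟶ Y (i + 1)
  K : ℕ → C
  ι : ∀ i, K i ⟶ Y (i + 1)
  π : ∀ i, Y i ⟶ K i
  hK0 : K 0 = Y 0
  hKm : K m = Y (m + 1)
  zero : ∀ i, ι i ≫ π (i + 1) = 0
  shortExact : ∀ i, (ShortComplex.mk (ι i) (π (i + 1)) (zero i)).ShortExact
  d0_eq : eqToHom hK0 ≫ d 0 = ι 0
  dmid_eq : ∀ i, 1 ≤ i → i + 1 ≤ m → d i = π i ≫ ι i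
  dlast_eq : d m = π m ≫ eqToHom hKm

/-- The Yoneda class of the chain of the first `j` short exact sequences,
obtained as the Yoneda composite of their `Ext¹`-classes. -/
noncomputable def ExactExtension.chainClass {m : ℕ} (T : ExactExtension C m) :
    ∀ j : ℕ, Ext (T.K j) (T.K 0) j
  | 0 => Ext.mk₀ (𝟙 _)
  | (j + 1) => ((T.shortExact j).extClass).comp (T.chainClass j) (by omega)

/-- The Yoneda class `[ξ] ∈ Ext^m (Y (m+1)) (Y 0)` of the exact sequence
`0 → Y 0 → ⋯ → Y (m+1) → 0`, i.e. the Yoneda composite of the `Ext¹`-classes of the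
short exact sequences obtained by splicing it at its images. -/
noncomputable def ExactExtension.extClass {m : ℕ} (T : ExactExtension C m) :
    Ext (T.Y (m + 1)) (T.Y 0) m :=
  (Ext.mk₀ (eqToHom T.hKm.symm)).comp
    ((T.chainClass m).comp (Ext.mk₀ (eqToHom T.hK0)) (add_zero m)) (zero_add m)

/-- Transport of an `Ext`-class along equalities of objects. -/
noncomputable def extTransport {X X' Z Z' : C} {a : ℕ} (e : Ext X Z a)
    (hX : X = X') (hZ : Z = Z') : Ext X' Z' a :=
  (Ext.mk₀ (eqToHom hX.symm)).comp (e.comp (Ext.mk₀ (eqToHom hZ)) (add_zero a)) (zero_add a)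

/-- Exactness, at every spot, of the long sequence of abelian groups
`0 → Hom(X,Y⁰) → ⋯ → Hom(X,Y^{n+1}) → Extⁿ(X,Y⁰) → ⋯ → Extⁿ(X,Y^{n+1}) → Ext^{2n}(X,Y⁰) → ⋯`
(`Ext⁰ = Hom`), where within each row the maps are induced by the differentials of `T` and each
connecting map `Ext^{kn}(X,Y^{n+1}) → Ext^{(k+1)n}(X,Y⁰)` is Yoneda composition with the class
`[T] ∈ Extⁿ(Y^{n+1},Y⁰)`. -/
def CovLES (n : ℕ) (X : C) (T : ExactExtension C n) : Prop :=
  (Function.Injective fun e : Ext X (T.Y 0) 0 => e.comp (Ext.mk₀ (T.d 0)) (add_zero 0)) ∧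
  (∀ k i : ℕ, i < n → Function.Exact
      (fun e : Ext X (T.Y i) (k * n) => e.comp (Ext.mk₀ (T.d i)) (add_zero _))
      (fun e : Ext X (T.Y (i + 1)) (k * n) => e.comp (Ext.mk₀ (T.d (i + 1))) (add_zero _))) ∧
  (∀ k : ℕ, Function.Exact
      (fun e : Ext X (T.Y n) (k * n) => e.comp (Ext.mk₀ (T.d n)) (add_zero _))
      (fun e : Ext X (T.Y (n + 1)) (k * n) =>
        e.comp T.extClass (show k * n + n = (k + 1) * n by ring))) ∧
  (∀ k : ℕ, Function.Exact
      (fun e : Ext X (T.Y (n + 1)) (k * n) =>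
        e.comp T.extClass (show k * n + n = (k + 1) * n by ring))
      (fun e : Ext X (T.Y 0) ((k + 1) * n) => e.comp (Ext.mk₀ (T.d 0)) (add_zero _)))

/-- Exactness, at every spot, of the long sequence of abelian groups
`0 → Hom(Y^{n+1},Z) → ⋯ → Hom(Y⁰,Z) → Extⁿ(Y^{n+1},Z) → ⋯ → Extⁿ(Y⁰,Z) → Ext^{2n}(Y^{n+1},Z) → ⋯`
(`Ext⁰ = Hom`), where within each row the maps are induced by the differentials of `T` and each
connecting map `Ext^{kn}(Y⁰,Z) → Ext^{(k+1)n}(Y^{n+1},Z)` is Yoneda precomposition with the class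
`[T] ∈ Extⁿ(Y^{n+1},Y⁰)`. -/
def ContraLES (n : ℕ) (Z : C) (T : ExactExtension C n) : Prop :=
  (Function.Injective fun e : Ext (T.Y (n + 1)) Z 0 => (Ext.mk₀ (T.d n)).comp e (zero_add 0)) ∧
  (∀ k i : ℕ, i < n → Function.Exact
      (fun e : Ext (T.Y (i + 2)) Z (k * n) => (Ext.mk₀ (T.d (i + 1))).comp e (zero_add _))
      (fun e : Ext (T.Y (i + 1)) Z (k * n) => (Ext.mk₀ (T.d i)).comp e (zero_add _))) ∧
  (∀ k : ℕ, Function.Exact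
      (fun e : Ext (T.Y 1) Z (k * n) => (Ext.mk₀ (T.d 0)).comp e (zero_add _))
      (fun e : Ext (T.Y 0) Z (k * n) =>
        T.extClass.comp e (show n + k * n = (k + 1) * n by ring))) ∧
  (∀ k : ℕ, Function.Exact
      (fun e : Ext (T.Y 0) Z (k * n) =>
        T.extClass.comp e (show n + k * n = (k + 1) * n by ring))
      (fun e : Ext (T.Y (n + 1)) Z ((k + 1) * n) => (Ext.mk₀ (T.d n)).comp e (zero_add _)))

end NZPaper

namespace NZPaper

/-!
Let `0 → A → B → D → 0` be short exact. The covariant long exact sequence kills `Ext^k(X, D)` as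
soon as `Ext^k(X, B)` and `Ext^{k+1}(X, A)` vanish, and `Ext^{k+1}(X, A)` as soon as
`Ext^{k+1}(X, B)` and `Ext^k(X, D)` vanish. Shifting dimension along the splices towards the left
end, `Ext^k(X, C^j)` is controlled by the degrees `k, …, k + j`; towards the right end, by the
degrees `k - (n - j), …, k`. A multiple of `n` in the first window lies strictly between `k` and
`k + j`, so the previous multiple lies below the second window while the multiple itself lies above
it: one of the two windows always avoids `nℤ`.
-/

section

variable {C : Type u} [Category.{v} C] [Abelian C] [HasExt.{w} C] {X : C}

theorem subsingleton_ext_X₃_of_shortExact {S : ShortComplex C} (hS : S.ShortExact) {k : ℕ}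
    (h₂ : Subsingleton (Ext X S.X₂ k)) (h₁ : Subsingleton (Ext X S.X₁ (k + 1))) :
    Subsingleton (Ext X S.X₃ k) := by
  refine subsingleton_of_forall_eq 0 fun e => ?_
  obtain ⟨x, rfl⟩ := Ext.covariant_sequence_exact₃ X hS e rfl (Subsingleton.elim _ _)
  rw [Subsingleton.elim x 0, Ext.zero_comp]

theorem subsingleton_ext_X₁_of_shortExact {S : ShortComplex C} (hS : S.ShortExact) {k : ℕ}
    (h₂ : Subsingleton (Ext X S.X₂ (k + 1))) (h₃ : Subsingleton (Ext X S.X₃ k)) :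
    Subsingleton (Ext X S.X₁ (k + 1)) := by
  refine subsingleton_of_forall_eq 0 fun e => ?_
  obtain ⟨x, rfl⟩ := Ext.covariant_sequence_exact₁ X hS e (Subsingleton.elim _ _) rfl
  rw [Subsingleton.elim x 0, Ext.zero_comp]

namespace ExactExtension

variable {m : ℕ} (T : ExactExtension C m)

theorem subsingleton_ext_K_of_left {j k : ℕ}
    (h : ∀ p q, p + q = j → Subsingleton (Ext X (T.Y p) (k + q))) :
    Subsingleton (Ext X (T.K j) k) := by
  induction j generalizing k with
  | zero =>
    rw [T.hK0]
    exact h 0 0 rfl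
  | succ j ih =>
    have h_prev : Subsingleton (Ext X (T.K j) (k + 1)) :=
      ih fun p q hpq => by
        rw [add_assoc, add_comm 1 q]
        exact h p (q + 1) (by omega)
    exact subsingleton_ext_X₃_of_shortExact (T.shortExact j) (h (j + 1) 0 rfl) h_prev

theorem subsingleton_ext_K_of_right {j l k : ℕ} (hjl : j + l = m)
    (h : ∀ p q, p + q = l → Subsingleton (Ext X (T.Y (j + p + 1)) (k + q))) :
    Subsingleton (Ext X (T.K j) (k + l)) := by
  induction l generalizing j with
  | zero =>
    obtain rfl : j = m := hjl
    rw [T.hKm]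
    exact h 0 0 rfl
  | succ l ih =>
    have h_next : Subsingleton (Ext X (T.K (j + 1)) (k + l)) :=
      ih (by omega) fun p q hpq => by
        rw [add_assoc j 1 p, add_comm 1 p]
        exact h (p + 1) q (by omega)
    exact subsingleton_ext_X₁_of_shortExact (T.shortExact j) (h 0 (l + 1) (zero_add _)) h_next

end ExactExtension

theorem IsNZClusterTilting.subsingleton_ext {n : ℕ} {M : Set C} (hM : IsNZClusterTilting n M)
    {Y : C} (hX : X ∈ M) (hY : Y ∈ M) {k : ℕ} (hk : ¬ n ∣ k) : Subsingleton (Ext X Y k) := by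
  have hk_pos : 1 ≤ k := Nat.pos_of_ne_zero fun h => hk (h ▸ dvd_zero n)
  exact subsingleton_of_forall_eq 0 (hM.2 X hX Y hY k hk_pos hk)

end

theorem forall_Icc_add_not_dvd_or_forall_Icc_sub_not_dvd {n j l k : ℕ} (hjl : j + l = n)
    (hk : ¬ n ∣ k) (hkj : ¬ n ∣ k + j) :
    (∀ a ∈ Set.Icc k (k + j), ¬ n ∣ a) ∨ (l ≤ k ∧ ∀ a ∈ Set.Icc (k - l) k, ¬ n ∣ a) := by
  refine or_iff_not_imp_left.mpr fun h => ?_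
  push Not at h
  obtain ⟨b, ⟨hb_ge, hb_le⟩, hb⟩ := h
  have hb_gt : k < b := lt_of_le_of_ne hb_ge fun h => hk (h ▸ hb)
  have hb_lt : b < k + j := lt_of_le_of_ne hb_le fun h => hkj (h ▸ hb)
  have hb_ge_n : n ≤ b := Nat.le_of_dvd (by omega) hb
  refine ⟨by omega, fun a ⟨hla, hak⟩ ha => ?_⟩
  have hb_sub_a : n ≤ b - a := Nat.le_of_dvd (by omega) (Nat.dvd_sub hb ha)
  omega

theorem ext_image_vanishes_nZ_general
    {C : Type u} [Category.{v} C] [Abelian C] [HasExt.{w} C]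
    {n : ℕ} (T : ExactExtension C n) {X : C}
    (hT : ∀ i ≤ n + 1, ∀ k, ¬ n ∣ k → Subsingleton (Ext X (T.Y i) k))
    {j : ℕ} (hj : j ≤ n) {k : ℕ} (hk : ¬ n ∣ k) (hkj : ¬ n ∣ k + j) :
    Subsingleton (Ext X (T.K j) k) := by
  obtain ⟨l, hjl⟩ := Nat.exists_eq_add_of_le hj
  rcases forall_Icc_add_not_dvd_or_forall_Icc_sub_not_dvd hjl.symm hk hkj with
    h_left | ⟨hlk, h_right⟩
  · exact T.subsingleton_ext_K_of_left fun p q hpq =>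
      hT p (by omega) _ (h_left _ ⟨by omega, by omega⟩)
  · obtain ⟨k', rfl⟩ := Nat.exists_eq_add_of_le' hlk
    exact T.subsingleton_ext_K_of_right hjl.symm fun p q hpq =>
      hT _ (by omega) _ (h_right _ ⟨by omega, by omega⟩)

/-- Let `𝓔` be an abelian category, `n ≥ 1`, `M` an `nℤ`-cluster tilting
subcategory of `𝓔`, and `Y` an `n`-exact sequence in `M`.  For `j ∈ {1,…,n-1}` let
`C^j = Im(Y^j → Y^{j+1})` (realized as the splice object `T.K j`).  If `Ext^k(X, C^j) ≠ 0` for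
some `X ∈ M` and some `k ≥ 1`, then `n ∣ k` or `n ∣ (k + j)`; equivalently, if `n ∤ k` and
`n ∤ (k + j)` then `Ext^k(X, C^j) = 0`. -/
theorem ext_image_vanishes_nZ
    {C : Type u} [Category.{v} C] [Abelian C] [HasExt.{w} C]
    (n : ℕ) (hn : 1 ≤ n) (M : Set C) (hM : IsNZClusterTilting n M)
    (T : ExactExtension C n) (hT : ∀ i ≤ n + 1, T.Y i ∈ M)
    (j : ℕ) (hj1 : 1 ≤ j) (hj2 : j ≤ n - 1)
    (X : C) (hX : X ∈ M)
    (k : ℕ) (hk1 : 1 ≤ k) (hk : ¬ (n ∣ k)) (hkj : ¬ (n ∣ (k + j))) :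
    ∀ e : Ext X (T.K j) k, e = 0 :=
  have := ext_image_vanishes_nZ_general T (fun i hi _ => hM.subsingleton_ext hX (hT i hi))
    (hj2.trans (Nat.sub_le n 1)) hk hkj
  fun e => Subsingleton.elim e 0

end NZPaper
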